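/- For all integers d, k with 1 ≤ k < d, the growth constant of closed (d,k)-self-avoiding manifolds satisfies the lower bound limsup_{n→∞} (c^SAM_{(d,k),n}(0))^{1/n} ≥ ((k+1)(d−k))^{1/(2k)}. -/

import Mathlib

open Filter

/-- A `k`-face of the hypercubic lattice `ℤ^d`: an orientation set `S ⊆ {1,…,d}`
together with a base vertex `v ∈ ℤ^d`. -/
abbrev Face (d : ℕ) := Finset (Fin d) × (Fin d → ℤ)

/-- The boundary `(k-1)`-edges of a `k`-face `(S, v)`: the `(k-1)`-faces
`(S \ {i}, v)` and `(S \ {i}, v + e_i)` for `i ∈ S`. -/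
def faceEdges {d : ℕ} (f : Face d) : Finset (Face d) :=
  f.1.biUnion fun i =>
    {(f.1.erase i, f.2), (f.1.erase i, f.2 + Pi.single i 1)}

/-- Two faces are adjacent if they are distinct and share a common boundary edge. -/
def FaceAdj {d : ℕ} (f g : Face d) : Prop :=
  f ≠ g ∧ ∃ e, e ∈ faceEdges f ∧ e ∈ faceEdges g

/-- A set of faces is connected with respect to adjacency. -/
def ConnectedFaces {d : ℕ} (M : Finset (Face d)) : Prop :=
  ∀ f ∈ M, ∀ g ∈ M, Relation.ReflTransGen (fun a b => a ∈ M ∧ b ∈ M ∧ FaceAdj a b) f g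

/-- A `(d,k)`-self-avoiding manifold of `k`-area `n`: a connected set of `n` `k`-faces
such that every `(k-1)`-edge bounds at most two of its `k`-faces. -/
def IsSAM (d k n : ℕ) (M : Finset (Face d)) : Prop :=
  M.card = n ∧ (∀ f ∈ M, f.1.card = k) ∧ ConnectedFaces M ∧
    ∀ e : Face d, (M.filter fun f => e ∈ faceEdges f).card ≤ 2

/-- A closed `(d,k)`-self-avoiding manifold: every boundary edge of every face
is shared by exactly two faces. -/
def IsClosedSAM (d k n : ℕ) (M : Finset (Face d)) : Prop :=
  IsSAM d k n M ∧ ∀ f ∈ M, ∀ e ∈ faceEdges f,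
    (M.filter fun g => e ∈ faceEdges g).card = 2

/-- A `(d,k)`-fixed polyominoid of `k`-area `n`: a connected set of `n` `k`-faces. -/
def IsXD (d k n : ℕ) (M : Finset (Face d)) : Prop :=
  M.card = n ∧ (∀ f ∈ M, f.1.card = k) ∧ ConnectedFaces M

/-- Translation of a face by a lattice vector. -/
def translateFace {d : ℕ} (t : Fin d → ℤ) (f : Face d) : Face d := (f.1, f.2 + t)

/-- Two sets of faces are translation-equivalent. -/
def TransEquiv {d : ℕ} (A B : Finset (Face d)) : Prop :=
  ∃ t : Fin d → ℤ, A.image (translateFace t) = B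

/-- The number of `(d,k)`-self-avoiding manifolds of `k`-area `n`, up to translation. -/
noncomputable def samCount (d k n : ℕ) : ℕ :=
  Nat.card (Quot fun A B : {M : Finset (Face d) // IsSAM d k n M} =>
    TransEquiv A.val B.val)

/-- The number of closed `(d,k)`-self-avoiding manifolds of `k`-area `n`, up to
translation. -/
noncomputable def closedSamCount (d k n : ℕ) : ℕ :=
  Nat.card (Quot fun A B : {M : Finset (Face d) // IsClosedSAM d k n M} =>
    TransEquiv A.val B.val)

/-- The number of `(d,k)`-fixed polyominoids of `k`-area `n`, up to translation. -/
noncomputable def xdCount (d k n : ℕ) : ℕ :=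
  Nat.card (Quot fun A B : {M : Finset (Face d) // IsXD d k n M} =>
    TransEquiv A.val B.val)

/-!
Glue `N + 1` unit cubes of dimension `k + 1` into a chain in which each cube is attached by one of
its lower facets to an upper facet of its predecessor. The symmetric difference of their boundaries
is a closed manifold of `k`-area `2 * k * N + 2 * k + 2`, because every gluing cancels exactly one
facet on either side. There are `(k + 1) * (d - k)` ways to attach each cube, and distinct chains
from the same first cube bound distinct surfaces: the first cube of a chain is the one whose lower
facets are the faces of the surface at its lowest vertex. Hence the count at area `2 * k * N + O(1)`
is at least `((k + 1) * (d - k)) ^ N`.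

Since `limsup` is meaningful in `ℝ` only for bounded sequences, the count must also be shown to grow
at most exponentially.
-/

/-! ### Translations -/

section Translation

open Finset

variable {d : ℕ} {f g : Face d} {M : Finset (Face d)}

theorem image_translateFace_zero (M : Finset (Face d)) : M.image (translateFace 0) = M := by
  have hid : (translateFace 0 : Face d → Face d) = id := by
    funext f
    simp [translateFace]
  rw [hid, image_id]

theorem image_translateFace_image_translateFace (s t : Fin d → ℤ) (M : Finset (Face d)) :
    (M.image (translateFace s)).image (translateFace t) = M.image (translateFace (s + t)) := by
  rw [image_image]
  congr 1
  funext f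
  simp [translateFace, add_assoc]

theorem translateFace_injective (t : Fin d → ℤ) :
    Function.Injective (translateFace t : Face d → Face d) :=
  fun _ _ h => Prod.ext (congrArg Prod.fst h :) (add_right_cancel (b := t) (congrArg Prod.snd h))

theorem faceEdges_translateFace (t : Fin d → ℤ) (f : Face d) :
    faceEdges (translateFace t f) = (faceEdges f).image (translateFace t) := by
  simp [faceEdges, translateFace, biUnion_image, image_insert, add_right_comm]

theorem FaceAdj.translateFace (h : FaceAdj f g) (t : Fin d → ℤ) :
    FaceAdj (translateFace t f) (translateFace t g) := by
  obtain ⟨hne, e, hef, heg⟩ := h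
  refine ⟨(translateFace_injective t).ne hne, _root_.translateFace t e, ?_, ?_⟩ <;>
    rw [faceEdges_translateFace]
  exacts [mem_image_of_mem _ hef, mem_image_of_mem _ heg]

theorem ConnectedFaces.image_translateFace (h : ConnectedFaces M) (t : Fin d → ℤ) :
    ConnectedFaces (M.image (translateFace t)) := by
  intro f' hf' g' hg'
  obtain ⟨f, hf, rfl⟩ := mem_image.1 hf'
  obtain ⟨g, hg, rfl⟩ := mem_image.1 hg'
  exact (h f hf g hg).lift _ fun _ _ ⟨hf, hg, hfg⟩ =>
    ⟨mem_image_of_mem _ hf, mem_image_of_mem _ hg, hfg.translateFace t⟩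

theorem transEquiv_equivalence : Equivalence (TransEquiv (d := d)) where
  refl M := ⟨0, image_translateFace_zero M⟩
  symm := by
    rintro A _ ⟨t, rfl⟩
    exact ⟨-t, by
      rw [image_translateFace_image_translateFace, add_neg_cancel, image_translateFace_zero]⟩
  trans := by
    rintro A _ _ ⟨s, rfl⟩ ⟨t, rfl⟩
    exact ⟨s + t, (image_translateFace_image_translateFace s t A).symm⟩

theorem transEquiv_of_quotMk_eq {P : Finset (Face d) → Prop} {A B : {M // P M}}
    (h : Quot.mk (fun A B : {M // P M} => TransEquiv A.1 B.1) A = Quot.mk _ B) :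
    TransEquiv A.1 B.1 :=
  (transEquiv_equivalence.comap Subtype.val).eqvGen_iff.1 (Quot.eqvGen_exact h)

end Translation

/-! ### Boundaries of cubes -/

section CubeBoundary

open Finset

variable {d k m n : ℕ} {Q F f g e : Face d} {M A B : Finset (Face d)} {a b i : Fin d}
  {α β : ℤ}

/-- The facet of the cube `Q` orthogonal to the direction `a`, on the lower side for `α = 0` and on
the upper side for `α = 1`. -/
def facet (Q : Face d) (a : Fin d) (α : ℤ) : Face d :=
  (Q.1.erase a, Q.2 + Pi.single a α)

theorem facet_zero (Q : Face d) (a : Fin d) : facet Q a 0 = (Q.1.erase a, Q.2) := by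
  simp [facet]

theorem mem_faceEdges :
    e ∈ faceEdges f ↔ ∃ a ∈ f.1, ∃ α : ℤ, (α = 0 ∨ α = 1) ∧ e = facet f a α := by
  simp [faceEdges, facet, or_and_right, exists_or]

theorem facet_mem_faceEdges (ha : a ∈ Q.1) (hα : α = 0 ∨ α = 1) : facet Q a α ∈ faceEdges Q :=
  mem_faceEdges.2 ⟨a, ha, α, hα, rfl⟩

theorem facet_facet_comm (Q : Face d) (a b : Fin d) (α β : ℤ) :
    facet (facet Q a α) b β = facet (facet Q b β) a α :=
  Prod.ext erase_right_comm (add_right_comm _ _ _)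

theorem facet_inj (ha : a ∈ Q.1) : facet Q a α = facet Q b β ↔ a = b ∧ α = β := by
  refine ⟨fun h => ?_, by rintro ⟨rfl, rfl⟩; rfl⟩
  obtain rfl : a = b := (erase_inj Q.1 ha).1 (congrArg Prod.fst h)
  exact ⟨rfl, Pi.single_injective a (add_left_cancel (congrArg Prod.snd h))⟩

theorem card_of_mem_faceEdges (h : f ∈ faceEdges Q) : #f.1 + 1 = #Q.1 := by
  obtain ⟨a, ha, α, -, rfl⟩ := mem_faceEdges.1 h
  exact card_erase_add_one ha

theorem base_le_of_mem_faceEdges (h : f ∈ faceEdges Q) : Q.2 ≤ f.2 := by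
  obtain ⟨a, -, α, hα, rfl⟩ := mem_faceEdges.1 h
  simp only [facet, le_add_iff_nonneg_right, Pi.single_nonneg]
  lia

theorem card_faceEdges (Q : Face d) : #(faceEdges Q) = 2 * #Q.1 := by
  have hpair (a : Fin d) : #{(Q.1.erase a, Q.2), (Q.1.erase a, Q.2 + Pi.single a 1)} = 2 :=
    card_pair fun h => by simpa using congrFun (congrArg Prod.snd h) a
  rw [faceEdges, card_biUnion, sum_congr rfl fun a _ => hpair a, sum_const, smul_eq_mul, mul_comm]
  intro a ha b _ hab
  refine disjoint_left.2 fun f hfa hfb => hab ((erase_inj Q.1 ha).1 ?_)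
  simp only [mem_insert, mem_singleton] at hfa hfb
  grind

/-- The number of faces of `M` around the edge `e`. -/
def edgeDegree (M : Finset (Face d)) (e : Face d) : ℕ := #{f ∈ M | e ∈ faceEdges f}

theorem edgeDegree_ne_zero : edgeDegree M e ≠ 0 ↔ ∃ f ∈ M, e ∈ faceEdges f := by
  simp [edgeDegree, filter_eq_empty_iff]

theorem filter_faceEdges_facet_facet (ha : a ∈ Q.1) (hb : b ∈ Q.1) (hab : a ≠ b)
    (hα : α = 0 ∨ α = 1) (hβ : β = 0 ∨ β = 1) :
    {f ∈ faceEdges Q | facet (facet Q a α) b β ∈ faceEdges f} = {facet Q a α, facet Q b β} := by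
  ext f
  simp only [mem_filter, mem_insert, mem_singleton]
  constructor
  · rintro ⟨hf, he⟩
    obtain ⟨c, hcQ, γ, -, rfl⟩ := mem_faceEdges.1 hf
    obtain ⟨x, hx, δ, -, h⟩ := mem_faceEdges.1 he
    have hxc : x ≠ c := ne_of_mem_erase hx
    have hdir : c = a ∨ c = b := by
      have hc : c ∉ (facet (facet Q a α) b β).1 := h ▸ by simp [facet]
      simp only [facet, mem_erase] at hc
      grind
    have hcoord := congrFun (congrArg Prod.snd h) c
    simp only [facet, Pi.add_apply, Pi.single_apply] at hcoord
    grind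
  · rintro (rfl | rfl)
    · exact ⟨facet_mem_faceEdges ha hα, facet_mem_faceEdges (mem_erase.2 ⟨hab.symm, hb⟩) hβ⟩
    · rw [facet_facet_comm]
      exact ⟨facet_mem_faceEdges hb hβ, facet_mem_faceEdges (mem_erase.2 ⟨hab, ha⟩) hα⟩

theorem edgeDegree_faceEdges (Q e : Face d) :
    edgeDegree (faceEdges Q) e = 0 ∨ edgeDegree (faceEdges Q) e = 2 := by
  refine or_iff_not_imp_left.2 fun h => ?_
  obtain ⟨f, hf, he⟩ := edgeDegree_ne_zero.1 h
  obtain ⟨a, ha, α, hα, rfl⟩ := mem_faceEdges.1 hf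
  obtain ⟨b, hb, β, hβ, rfl⟩ := mem_faceEdges.1 he
  obtain ⟨hba, hbQ⟩ := mem_erase.1 hb
  rw [edgeDegree, filter_faceEdges_facet_facet ha hbQ hba.symm hα hβ, card_pair]
  exact fun h => hba ((facet_inj ha).1 h).1.symm

theorem mem_and_eq_facet_one_of_lt (hf : f ∈ faceEdges Q) (h : Q.2 i < f.2 i) :
    i ∈ Q.1 ∧ f = facet Q i 1 := by
  obtain ⟨a, ha, α, hα, rfl⟩ := mem_faceEdges.1 hf
  simp only [facet, Pi.add_apply, Pi.single_apply] at h
  grind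

theorem mem_faceEdges_facet_one_of_lt (hf : f ∈ faceEdges Q) (he : e ∈ faceEdges f)
    (h : Q.2 i < e.2 i) : e ∈ faceEdges (facet Q i 1) := by
  obtain hif | hif := (base_le_of_mem_faceEdges hf i).lt_or_eq
  · exact (mem_and_eq_facet_one_of_lt hf hif).2 ▸ he
  obtain ⟨hi, rfl⟩ := mem_and_eq_facet_one_of_lt he (hif ▸ h)
  obtain ⟨a, ha, α, hα, rfl⟩ := mem_faceEdges.1 hf
  rw [facet_facet_comm]
  exact facet_mem_faceEdges (mem_erase.2 ⟨(ne_of_mem_erase hi).symm, ha⟩) hα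

theorem faceAdj_facet_facet (ha : a ∈ Q.1) (hb : b ∈ Q.1) (hab : a ≠ b)
    (hα : α = 0 ∨ α = 1) (hβ : β = 0 ∨ β = 1) : FaceAdj (facet Q a α) (facet Q b β) := by
  refine ⟨fun h => hab ((facet_inj ha).1 h).1, facet (facet Q a α) b β, ?_, ?_⟩
  · exact facet_mem_faceEdges (mem_erase.2 ⟨hab.symm, hb⟩) hβ
  · rw [facet_facet_comm]
    exact facet_mem_faceEdges (mem_erase.2 ⟨hab, ha⟩) hα

/-- Adjacency of two faces of `M`, the relation whose chains occur in `ConnectedFaces`. -/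
def AdjIn (M : Finset (Face d)) (f g : Face d) : Prop := f ∈ M ∧ g ∈ M ∧ FaceAdj f g

theorem FaceAdj.symm (h : FaceAdj f g) : FaceAdj g f :=
  ⟨h.1.symm, h.2.imp fun _ => And.symm⟩

instance AdjIn.stdSymm : Std.Symm (AdjIn M) :=
  ⟨fun _ _ h => ⟨h.2.1, h.1, h.2.2.symm⟩⟩

theorem connectedFaces_of_forall_reflTransGen (h : ∀ f ∈ M, Relation.ReflTransGen (AdjIn M) f g) :
    ConnectedFaces M :=
  fun f₁ h₁ f₂ h₂ => (h f₁ h₁).trans (symm (h f₂ h₂))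

theorem ConnectedFaces.insert (hM : ConnectedFaces M) (hg : g ∈ M) (hfg : FaceAdj f g) :
    ConnectedFaces (insert f M) := by
  refine connectedFaces_of_forall_reflTransGen (g := g) fun f' hf' => ?_
  obtain rfl | hf' := mem_insert.1 hf'
  · exact .single ⟨mem_insert_self _ _, mem_insert_of_mem hg, hfg⟩
  · exact Relation.ReflTransGen.mono
      (fun _ _ h => ⟨mem_insert_of_mem h.1, mem_insert_of_mem h.2.1, h.2.2⟩) _ _ (hM f' hf' g hg)

theorem connectedFaces_faceEdges_erase_facet_one (hi : i ∈ Q.1) :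
    ConnectedFaces ((faceEdges Q).erase (facet Q i 1)) := by
  refine connectedFaces_of_forall_reflTransGen (g := facet Q i 0) fun f hf => ?_
  obtain ⟨hne, hfQ⟩ := mem_erase.1 hf
  obtain ⟨a, ha, α, hα, rfl⟩ := mem_faceEdges.1 hfQ
  obtain rfl | hai := eq_or_ne a i
  · obtain rfl : α = 0 := hα.resolve_right fun h => hne (h ▸ rfl)
    exact .refl
  · have hbottom : facet Q i 0 ∈ (faceEdges Q).erase (facet Q i 1) :=
      mem_erase.2 ⟨by simp [facet_inj hi], facet_mem_faceEdges hi (.inl rfl)⟩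
    exact .single ⟨hf, hbottom, faceAdj_facet_facet ha hi hai hα (.inl rfl)⟩

theorem connectedFaces_faceEdges (hQ : 1 < #Q.1) : ConnectedFaces (faceEdges Q) := by
  obtain ⟨i, hi, j, hj, hij⟩ := one_lt_card.1 hQ
  rw [← insert_erase (facet_mem_faceEdges hi (.inr rfl))]
  refine (connectedFaces_faceEdges_erase_facet_one hi).insert (g := facet Q j 0) ?_
    (faceAdj_facet_facet hi hj hij (.inr rfl) (.inl rfl))
  exact mem_erase.2 ⟨by simp [facet_inj hj, hij.symm], facet_mem_faceEdges hj (.inl rfl)⟩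

theorem isClosedSAM_iff :
    IsClosedSAM d k n M ↔ #M = n ∧ (∀ f ∈ M, #f.1 = k) ∧ ConnectedFaces M ∧
      ∀ e, edgeDegree M e = 0 ∨ edgeDegree M e = 2 := by
  refine ⟨fun ⟨⟨hcard, hdim, hconn, _⟩, hclosed⟩ => ⟨hcard, hdim, hconn, fun e => ?_⟩,
    fun ⟨hcard, hdim, hconn, hdeg⟩ =>
      ⟨⟨hcard, hdim, hconn, fun e => ?_⟩, fun f hf e he => ?_⟩⟩
  · refine or_iff_not_imp_left.2 fun h => ?_
    obtain ⟨f, hf, he⟩ := edgeDegree_ne_zero.1 h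
    exact hclosed f hf e he
  · obtain h | h := hdeg e <;> exact h.le.trans (by simp)
  · exact (hdeg e).resolve_left (edgeDegree_ne_zero.2 ⟨f, hf, he⟩)

theorem isClosedSAM_faceEdges (hk : 1 ≤ k) (hQ : #Q.1 = k + 1) :
    IsClosedSAM d k (2 * (k + 1)) (faceEdges Q) :=
  isClosedSAM_iff.2 ⟨hQ ▸ card_faceEdges Q,
    fun _ hf => Nat.succ_injective ((card_of_mem_faceEdges hf).trans hQ),
    connectedFaces_faceEdges (by lia), edgeDegree_faceEdges Q⟩

theorem card_symmDiff_add_two_mul_card_inter {ι : Type*} [DecidableEq ι] (s t : Finset ι) :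
    #(symmDiff s t) + 2 * #(s ∩ t) = #s + #t := by
  have hdisj : Disjoint (symmDiff s t) (s ∩ t) := disjoint_symmDiff_inf s t
  have hunion : symmDiff s t ∪ s ∩ t = s ∪ t := symmDiff_sup_inf s t
  rw [two_mul, ← add_assoc, ← card_union_of_disjoint hdisj, hunion, card_union_add_card_inter]

theorem edgeDegree_singleton (F e : Face d) :
    edgeDegree {F} e = if e ∈ faceEdges F then 1 else 0 := by
  rw [edgeDegree, filter_singleton]
  split_ifs <;> rfl

theorem edgeDegree_symmDiff (A B : Finset (Face d)) (e : Face d) :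
    edgeDegree (symmDiff A B) e + 2 * edgeDegree (A ∩ B) e = edgeDegree A e + edgeDegree B e := by
  have hfilter : {f ∈ symmDiff A B | e ∈ faceEdges f} =
      symmDiff {f ∈ A | e ∈ faceEdges f} {f ∈ B | e ∈ faceEdges f} := by
    ext f
    simp only [mem_filter, mem_symmDiff]
    tauto
  simp only [edgeDegree, hfilter, filter_inter_distrib]
  exact card_symmDiff_add_two_mul_card_inter _ _

theorem mem_symmDiff_of_inter_eq_singleton (hAB : A ∩ B = {F}) :
    f ∈ symmDiff A B ↔ f ≠ F ∧ (f ∈ A ∨ f ∈ B) := by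
  have hF : f ∈ A ∩ B ↔ f = F := by rw [hAB, mem_singleton]
  rw [mem_inter] at hF
  rw [mem_symmDiff]
  tauto

theorem IsClosedSAM.exists_ne_of_mem_faceEdges (hA : IsClosedSAM d k n A) (hf : f ∈ A)
    (he : e ∈ faceEdges f) : ∃ g ∈ A, g ≠ f ∧ e ∈ faceEdges g := by
  obtain ⟨g, hg, hgf⟩ := exists_mem_ne (one_lt_two.trans_eq (hA.2 f hf e he).symm) f
  exact ⟨g, (mem_filter.1 hg).1, hgf, (mem_filter.1 hg).2⟩

/- A path in `B` from `f` to `F` reaches `F` through an edge `e` of `F`; as `A` is closed, `e` also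
bounds a face of `A` other than `F`, where the path can end instead. -/
theorem exists_reflTransGen_symmDiff (hA : IsClosedSAM d k n A) (hAB : A ∩ B = {F}) (hfF : f ≠ F)
    (hf : Relation.ReflTransGen (AdjIn B) f F) :
    ∃ g ∈ A.erase F, Relation.ReflTransGen (AdjIn (symmDiff A B)) f g := by
  have hFA : F ∈ A := (mem_inter.1 (hAB ▸ mem_singleton_self F)).1
  induction hf using Relation.ReflTransGen.head_induction_on with
  | refl => exact absurd rfl hfF
  | @head f f' hff' _ ih =>
    have hfS : f ∈ symmDiff A B := (mem_symmDiff_of_inter_eq_singleton hAB).2 ⟨hfF, .inr hff'.1⟩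
    obtain rfl | hf'F := eq_or_ne f' F
    · obtain ⟨e, hef, heF⟩ := hff'.2.2.2
      obtain ⟨g, hgA, hgF, heg⟩ := hA.exists_ne_of_mem_faceEdges hFA heF
      have hgS := (mem_symmDiff_of_inter_eq_singleton hAB).2 ⟨hgF, .inl hgA⟩
      have hfg : f ≠ g := by
        rintro rfl
        exact hfF (mem_singleton.1 (hAB ▸ mem_inter.2 ⟨hgA, hff'.1⟩))
      exact ⟨g, mem_erase.2 ⟨hgF, hgA⟩, .single ⟨hfS, hgS, hfg, e, hef, heg⟩⟩
    · obtain ⟨g, hg, hf'g⟩ := ih hf'F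
      have hf'S := (mem_symmDiff_of_inter_eq_singleton hAB).2 ⟨hf'F, .inr hff'.2.1⟩
      exact ⟨g, hg, .head ⟨hfS, hf'S, hff'.2.2⟩ hf'g⟩

theorem connectedFaces_symmDiff (hA : IsClosedSAM d k n A) (hB : ConnectedFaces B)
    (hAB : A ∩ B = {F}) (hconn : ConnectedFaces (A.erase F)) :
    ConnectedFaces (symmDiff A B) := by
  have hFB : F ∈ B := (mem_inter.1 (hAB ▸ mem_singleton_self F)).2
  have hexists (f) (hf : f ∈ symmDiff A B) :
      ∃ g ∈ A.erase F, Relation.ReflTransGen (AdjIn (symmDiff A B)) f g := by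
    obtain ⟨hfF, hfA | hfB⟩ := (mem_symmDiff_of_inter_eq_singleton hAB).1 hf
    · exact ⟨f, mem_erase.2 ⟨hfF, hfA⟩, .refl⟩
    · exact exists_reflTransGen_symmDiff hA hAB hfF (hB f hfB F hFB)
  have hsub : A.erase F ⊆ symmDiff A B := fun f hf =>
    (mem_symmDiff_of_inter_eq_singleton hAB).2 ⟨ne_of_mem_erase hf, .inl (mem_of_mem_erase hf)⟩
  intro f hf g hg
  obtain ⟨f', hf', hff'⟩ := hexists f hf
  obtain ⟨g', hg', hgg'⟩ := hexists g hg
  have hf'g' : Relation.ReflTransGen (AdjIn (symmDiff A B)) f' g' :=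
    Relation.ReflTransGen.mono (fun _ _ h => ⟨hsub h.1, hsub h.2.1, h.2.2⟩) _ _
      (hconn f' hf' g' hg')
  exact (hff'.trans hf'g').trans (symm hgg')

theorem edgeDegree_symmDiff_of_inter_eq_singleton (hA : IsClosedSAM d k m A)
    (hB : IsClosedSAM d k n B) (hAB : A ∩ B = {F})
    (hedge : ∀ f ∈ A, ∀ g ∈ B, ∀ e ∈ faceEdges f, e ∈ faceEdges g → e ∈ faceEdges F)
    (e : Face d) :
    edgeDegree (symmDiff A B) e = 0 ∨ edgeDegree (symmDiff A B) e = 2 := by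
  obtain ⟨hFA, hFB⟩ := mem_inter.1 (hAB ▸ mem_singleton_self F)
  have hsum := edgeDegree_symmDiff A B e
  have hdegA := (isClosedSAM_iff.1 hA).2.2.2 e
  have hdegB := (isClosedSAM_iff.1 hB).2.2.2 e
  rw [hAB, edgeDegree_singleton] at hsum
  split_ifs at hsum with heF
  · have hA0 : edgeDegree A e ≠ 0 := edgeDegree_ne_zero.2 ⟨F, hFA, heF⟩
    have hB0 : edgeDegree B e ≠ 0 := edgeDegree_ne_zero.2 ⟨F, hFB, heF⟩
    lia
  · have h0 : edgeDegree A e = 0 ∨ edgeDegree B e = 0 := by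
      by_contra! h
      obtain ⟨f, hf, hef⟩ := edgeDegree_ne_zero.1 h.1
      obtain ⟨g, hg, heg⟩ := edgeDegree_ne_zero.1 h.2
      exact heF (hedge f hf g hg e hef heg)
    lia

theorem IsClosedSAM.symmDiff_of_inter_eq_singleton (hA : IsClosedSAM d k m A)
    (hB : IsClosedSAM d k n B) (hAB : A ∩ B = {F})
    (hedge : ∀ f ∈ A, ∀ g ∈ B, ∀ e ∈ faceEdges f, e ∈ faceEdges g → e ∈ faceEdges F)
    (hconn : ConnectedFaces (A.erase F)) :
    IsClosedSAM d k (m + n - 2) (symmDiff A B) := by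
  refine isClosedSAM_iff.2 ⟨?_, fun f hf => ?_,
    connectedFaces_symmDiff hA hB.1.2.2.1 hAB hconn,
    edgeDegree_symmDiff_of_inter_eq_singleton hA hB hAB hedge⟩
  · have hcard := card_symmDiff_add_two_mul_card_inter A B
    rw [hAB, card_singleton, hA.1.1, hB.1.1] at hcard
    lia
  · obtain ⟨-, hfA | hfB⟩ := (mem_symmDiff_of_inter_eq_singleton hAB).1 hf
    exacts [hA.1.2.1 f hfA, hB.1.2.1 f hfB]

/-- The face set `M` lies weakly above the base vertex of the cube `Q`, and its faces at this vertex
are exactly the lower facets of `Q`. The cube `Q` can therefore be read off `M`. -/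
structure IsRootedAt (Q : Face d) (M : Finset (Face d)) : Prop where
  base_le : ∀ f ∈ M, Q.2 ≤ f.2
  mem_iff : ∀ S, (S, Q.2) ∈ M ↔ ∃ a ∈ Q.1, S = Q.1.erase a

theorem isRootedAt_faceEdges (Q : Face d) : IsRootedAt Q (faceEdges Q) where
  base_le _ := base_le_of_mem_faceEdges
  mem_iff S := by
    refine ⟨fun h => ?_, ?_⟩
    · obtain ⟨a, ha, α, -, h⟩ := mem_faceEdges.1 h
      exact ⟨a, ha, congrArg Prod.fst h⟩
    · rintro ⟨a, ha, rfl⟩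
      exact facet_zero Q a ▸ facet_mem_faceEdges ha (.inl rfl)

namespace IsRootedAt

variable {Q' : Face d}

theorem erase_mem (h : IsRootedAt Q M) (ha : a ∈ Q.1) : (Q.1.erase a, Q.2) ∈ M :=
  (h.mem_iff _).2 ⟨a, ha, rfl⟩

theorem base_le_base (h : IsRootedAt Q M) (h' : IsRootedAt Q' M) (hQ' : Q'.1.Nonempty) :
    Q.2 ≤ Q'.2 :=
  let ⟨a, ha⟩ := hQ'
  h.base_le (Q'.1.erase a, Q'.2) (h'.erase_mem ha)

theorem fst_subset_fst (h : IsRootedAt Q M) (h' : IsRootedAt Q' M) (hbase : Q.2 = Q'.2)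
    (hQ : 1 < #Q.1) : Q.1 ⊆ Q'.1 := fun a ha => by
  obtain ⟨b, hb, hba⟩ := exists_mem_ne hQ a
  obtain ⟨c, -, hc⟩ := (h'.mem_iff _).1 (hbase ▸ h.erase_mem hb)
  exact mem_of_mem_erase (hc ▸ mem_erase.2 ⟨hba.symm, ha⟩)

theorem unique (h : IsRootedAt Q M) (h' : IsRootedAt Q' M) (hQ : 1 < #Q.1) (hQ' : 1 < #Q'.1) :
    Q = Q' := by
  have hbase : Q.2 = Q'.2 :=
    le_antisymm (h.base_le_base h' (card_pos.1 (by lia))) (h'.base_le_base h (card_pos.1 (by lia)))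
  exact Prod.ext (subset_antisymm (h.fst_subset_fst h' hbase hQ)
    (h'.fst_subset_fst h hbase.symm hQ')) hbase

theorem eq_of_transEquiv (hA : IsRootedAt Q A) (hB : IsRootedAt Q B) (hQ : Q.1.Nonempty)
    (h : TransEquiv A B) : A = B := by
  obtain ⟨t, rfl⟩ := h
  obtain ⟨a, ha⟩ := hQ
  have ht : 0 ≤ t :=
    le_add_iff_nonneg_right _ |>.1 (hB.base_le _ (mem_image_of_mem _ (hA.erase_mem ha)))
  have ht' : t ≤ 0 := by
    obtain ⟨f, hf, hft⟩ := mem_image.1 (hB.erase_mem ha)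
    have hf2 : f.2 + t = Q.2 := congrArg Prod.snd hft
    exact nonpos_of_add_le_right (hf2.trans_le (hA.base_le f hf))
  obtain rfl := le_antisymm ht' ht
  exact (image_translateFace_zero A).symm

end IsRootedAt

end CubeBoundary

/-! ### Chains of cubes -/

section CubeChain

open Finset

variable {d k n : ℕ} {Q Q' : Face d} {M : Finset (Face d)} {i j : Fin d}

/-- The cubes with a lower facet equal to an upper facet of `Q`; these are the possible successors
of `Q` in a directed chain of cubes. -/
def nextCubes (Q : Face d) : Finset (Face d) :=
  Q.1.biUnion fun i => (Q.1.erase i)ᶜ.image fun j => (insert j (Q.1.erase i), Q.2 + Pi.single i 1)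

theorem mem_nextCubes :
    Q' ∈ nextCubes Q ↔
      ∃ i ∈ Q.1, ∃ j ∉ Q.1.erase i, (insert j (Q.1.erase i), Q.2 + Pi.single i 1) = Q' := by
  simp only [nextCubes, mem_biUnion, mem_image, mem_compl]

theorem card_of_mem_nextCubes (h : Q' ∈ nextCubes Q) : #Q'.1 = #Q.1 := by
  obtain ⟨i, hi, j, hj, rfl⟩ := mem_nextCubes.1 h
  rw [card_insert_of_notMem hj, card_erase_add_one hi]

theorem card_nextCubes (hQ : #Q.1 = k + 1) : #(nextCubes Q) = (k + 1) * (d - k) := by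
  have hcard (i) (hi : i ∈ Q.1) : #((Q.1.erase i)ᶜ.image fun j =>
      ((insert j (Q.1.erase i), Q.2 + Pi.single i 1) : Face d)) = d - k := by
    rw [card_image_of_injOn, card_compl, card_erase_of_mem hi, hQ, Fintype.card_fin,
      Nat.add_sub_cancel]
    intro a ha b _ hab
    exact (insert_inj (mem_compl.1 ha)).1 (congrArg Prod.fst hab)
  rw [nextCubes, card_biUnion, sum_congr rfl hcard, sum_const, hQ, smul_eq_mul]
  intro a _ b _ hab
  refine disjoint_left.2 fun C hCa hCb => ?_
  obtain ⟨j, -, rfl⟩ := mem_image.1 hCa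
  obtain ⟨j', -, h⟩ := mem_image.1 hCb
  simpa [hab] using congrFun (congrArg Prod.snd h) a

theorem IsRootedAt.facet_one_mem (hj : j ∉ Q.1.erase i)
    (h : IsRootedAt (insert j (Q.1.erase i), Q.2 + Pi.single i 1) M) : facet Q i 1 ∈ M := by
  have := h.erase_mem (mem_insert_self j _)
  rwa [erase_insert hj] at this

theorem IsRootedAt.lt_base_of_nextCube {S : Finset (Fin d)}
    (h : IsRootedAt (S, Q.2 + Pi.single i 1) M) {f : Face d} (hf : f ∈ M) : Q.2 i < f.2 i := by
  simpa using h.base_le f hf i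

theorem IsRootedAt.symmDiff_faceEdges (hQ' : Q' ∈ nextCubes Q) (h : IsRootedAt Q' M) :
    IsRootedAt Q (symmDiff (faceEdges Q) M) := by
  obtain ⟨i, -, j, -, rfl⟩ := mem_nextCubes.1 hQ'
  have hQM (S : Finset (Fin d)) : (S, Q.2) ∉ M := fun hS => (h.lt_base_of_nextCube hS).false
  refine ⟨fun f hf => ?_, fun S => ?_⟩
  · obtain ⟨hf, -⟩ | ⟨hf, -⟩ := mem_symmDiff.1 hf
    · exact base_le_of_mem_faceEdges hf
    · exact (le_add_of_nonneg_right (by simp)).trans (h.base_le f hf)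
  · rw [mem_symmDiff, ← (isRootedAt_faceEdges Q).mem_iff]
    simp [hQM]

theorem IsClosedSAM.symmDiff_faceEdges (hk : 1 ≤ k) (hQ : #Q.1 = k + 1) (hQ' : Q' ∈ nextCubes Q)
    (hM : IsClosedSAM d k n M) (hroot : IsRootedAt Q' M) :
    IsClosedSAM d k (2 * k + n) (symmDiff (faceEdges Q) M) := by
  obtain ⟨i, hi, j, hj, rfl⟩ := mem_nextCubes.1 hQ'
  have hinter : faceEdges Q ∩ M = {facet Q i 1} := by
    refine eq_singleton_iff_unique_mem.2 ⟨mem_inter.2 ⟨facet_mem_faceEdges hi (.inr rfl),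
      hroot.facet_one_mem hj⟩, fun f hf => ?_⟩
    obtain ⟨hfQ, hfM⟩ := mem_inter.1 hf
    exact (mem_and_eq_facet_one_of_lt hfQ (hroot.lt_base_of_nextCube hfM)).2
  have hglued := (isClosedSAM_faceEdges hk hQ).symmDiff_of_inter_eq_singleton hM hinter
    (fun f hf g hg e hef heg => mem_faceEdges_facet_one_of_lt hf hef
      ((hroot.lt_base_of_nextCube hg).trans_le (base_le_of_mem_faceEdges heg i)))
    (connectedFaces_faceEdges_erase_facet_one hi)
  rwa [show 2 * (k + 1) + n - 2 = 2 * k + n by lia] at hglued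

/-- The boundary surfaces of the directed chains of `N + 1` cubes starting at `Q`. Successive cubes
share one facet, which the symmetric difference removes. -/
def chainSurfaces : ℕ → Face d → Finset (Finset (Face d))
  | 0, Q => {faceEdges Q}
  | N + 1, Q => (nextCubes Q).biUnion fun Q' =>
      (chainSurfaces N Q').image (symmDiff (faceEdges Q))

theorem isClosedSAM_and_isRootedAt_of_mem_chainSurfaces (hk : 1 ≤ k) :
    ∀ (N : ℕ) {Q : Face d} {M : Finset (Face d)}, #Q.1 = k + 1 → M ∈ chainSurfaces N Q →
      IsClosedSAM d k (2 * k * N + (2 * k + 2)) M ∧ IsRootedAt Q M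
  | 0, Q, M, hQ, hM => by
    obtain rfl := mem_singleton.1 hM
    exact ⟨by simpa [mul_add] using isClosedSAM_faceEdges hk hQ, isRootedAt_faceEdges Q⟩
  | N + 1, Q, M, hQ, hM => by
    simp only [chainSurfaces, mem_biUnion, mem_image] at hM
    obtain ⟨Q', hQ', M', hM', rfl⟩ := hM
    obtain ⟨hclosed, hroot⟩ := isClosedSAM_and_isRootedAt_of_mem_chainSurfaces hk N
      ((card_of_mem_nextCubes hQ').trans hQ) hM'
    refine ⟨?_, hroot.symmDiff_faceEdges hQ'⟩
    rw [show 2 * k * (N + 1) + (2 * k + 2) = 2 * k + (2 * k * N + (2 * k + 2)) by ring]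
    exact hclosed.symmDiff_faceEdges hk hQ hQ' hroot

theorem card_chainSurfaces (hk : 1 ≤ k) :
    ∀ (N : ℕ) {Q : Face d}, #Q.1 = k + 1 → #(chainSurfaces N Q) = ((k + 1) * (d - k)) ^ N
  | 0, _, _ => by simp [chainSurfaces]
  | N + 1, Q, hQ => by
    have hcardQ' {Q' : Face d} (hQ' : Q' ∈ nextCubes Q) : #Q'.1 = k + 1 :=
      (card_of_mem_nextCubes hQ').trans hQ
    have hcard (Q') (hQ' : Q' ∈ nextCubes Q) :
        #((chainSurfaces N Q').image (symmDiff (faceEdges Q))) = ((k + 1) * (d - k)) ^ N := by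
      rw [card_image_of_injective _ (symmDiff_right_injective _),
        card_chainSurfaces hk N (hcardQ' hQ')]
    rw [chainSurfaces, card_biUnion, sum_congr rfl hcard, sum_const, card_nextCubes hQ,
      smul_eq_mul, pow_succ']
    intro Q₁ h₁ Q₂ h₂ hne
    refine disjoint_left.2 fun M hM₁ hM₂ => hne ?_
    obtain ⟨M', hM₁', rfl⟩ := mem_image.1 hM₁
    obtain ⟨M'', hM₂', h⟩ := mem_image.1 hM₂
    obtain rfl := symmDiff_right_injective _ h
    have hroot {Q' : Face d} (hQ' : Q' ∈ nextCubes Q) (hM : M'' ∈ chainSurfaces N Q') :=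
      (isClosedSAM_and_isRootedAt_of_mem_chainSurfaces hk N (hcardQ' hQ') hM).2
    exact (hroot h₁ hM₁').unique (hroot h₂ hM₂') (by have := hcardQ' h₁; lia)
      (by have := hcardQ' h₂; lia)

end CubeChain

/-! ### Connected sets in graphs -/

section ConnectedSets

open Finset

variable {V : Type*} {G : SimpleGraph V}

theorem exists_walk_detour [DecidableEq V] {a x y : V} (w : G.Walk a a) (hx : x ∈ w.support)
    (hxy : G.Adj x y) :
    ∃ w' : G.Walk a a, w'.length = w.length + 2 ∧
      w'.support.toFinset = insert y w.support.toFinset := by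
  refine ⟨(w.takeUntil x hx).append (.cons hxy (.cons hxy.symm (w.dropUntil x hx))), ?_, ?_⟩
  · have hlen := congrArg SimpleGraph.Walk.length (w.take_spec hx)
    simp only [SimpleGraph.Walk.length_append, SimpleGraph.Walk.length_cons] at hlen ⊢
    lia
  · have hsupp (v) : v ∈ w.support ↔
        v ∈ (w.takeUntil x hx).support ∨ v ∈ (w.dropUntil x hx).support := by
      rw [← SimpleGraph.Walk.mem_support_append_iff, w.take_spec hx]
    ext v
    have hx' := (w.takeUntil x hx).end_mem_support
    simp only [List.mem_toFinset, SimpleGraph.Walk.mem_support_append_iff,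
      SimpleGraph.Walk.support_cons, List.mem_cons, mem_insert, hsupp]
    grind

theorem exists_closed_walk_forall_mem_support [Fintype V] (hG : G.Preconnected) (a : V) :
    ∃ w : G.Walk a a, w.length = 2 * (Fintype.card V - 1) ∧ ∀ v, v ∈ w.support := by
  classical
  have hcard : 0 < Fintype.card V := Fintype.card_pos_iff.2 ⟨a⟩
  have hgrow (m : ℕ) (hm : m < Fintype.card V) :
      ∃ w : G.Walk a a, w.length = 2 * m ∧ #w.support.toFinset = m + 1 := by
    induction m with
    | zero => exact ⟨.nil, rfl, rfl⟩
    | succ m ih =>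
      obtain ⟨w, hlen, hsupp⟩ := ih (by lia)
      obtain ⟨v, hv⟩ : ∃ v, v ∉ w.support.toFinset := by
        by_contra! h
        have := card_eq_iff_eq_univ _ |>.2 (eq_univ_iff_forall.2 h)
        lia
      obtain ⟨p⟩ := hG a v
      obtain ⟨⟨⟨x, y⟩, hxy⟩, -, hx, hy⟩ := p.exists_boundary_dart {u | u ∈ w.support}
        w.start_mem_support (by simpa using hv)
      obtain ⟨w', hlen', hsupp'⟩ := exists_walk_detour w hx hxy
      refine ⟨w', by lia, ?_⟩
      rw [hsupp', card_insert_of_notMem (by simpa using hy), hsupp]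
  obtain ⟨w, hlen, hsupp⟩ := hgrow (Fintype.card V - 1) (by lia)
  have huniv : w.support.toFinset = univ := (card_eq_iff_eq_univ _).1 (by lia)
  exact ⟨w, hlen, fun v => List.mem_toFinset.1 (huniv ▸ mem_univ v)⟩

theorem exists_finset_walk_support [DecidableEq V] {N : V → Finset V} {D : ℕ}
    (hN : ∀ a b, G.Adj a b → b ∈ N a) (hD : ∀ a, #(N a) ≤ D) (m : ℕ) (a : V) :
    ∃ 𝓕 : Finset (Finset V), #𝓕 ≤ D ^ m ∧
      ∀ (b : V) (w : G.Walk a b), w.length = m → w.support.toFinset ∈ 𝓕 := by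
  induction m generalizing a with
  | zero =>
    refine ⟨{{a}}, by simp, fun b w hw => ?_⟩
    obtain rfl := SimpleGraph.Walk.eq_of_length_eq_zero hw
    simp [(SimpleGraph.Walk.length_eq_zero_iff.1 hw).eq_nil]
  | succ m ih =>
    choose 𝓕 h𝓕card h𝓕 using ih
    refine ⟨(N a).biUnion fun b => (𝓕 b).image (insert a), ?_, fun b w hw => ?_⟩
    · calc _ ≤ #(N a) * D ^ m :=
            card_biUnion_le_card_mul _ _ _ fun b _ => card_image_le.trans (h𝓕card b)
        _ ≤ D ^ (m + 1) := by
            rw [pow_succ']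
            exact Nat.mul_le_mul_right _ (hD a)
    · cases w with
      | nil => simp at hw
      | @cons _ c _ hac p =>
        rw [SimpleGraph.Walk.support_cons, List.toFinset_cons]
        exact mem_biUnion.2 ⟨c, hN a c hac,
          mem_image_of_mem _ (h𝓕 c b p (Nat.succ_injective hw))⟩

/- A connected set of `n + 1` vertices is traced out by a closed walk of length `2 * n`, going twice
along each edge of a spanning tree. -/
theorem exists_finset_connected_finsets {N : V → Finset V} {D : ℕ}
    (hN : ∀ a b, G.Adj a b → b ∈ N a) (hD : ∀ a, #(N a) ≤ D) (n : ℕ) (a : V) :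
    ∃ 𝓕 : Finset (Finset V), #𝓕 ≤ D ^ (2 * n) ∧ ∀ M : Finset V, #M = n + 1 → a ∈ M →
      (G.induce (M : Set V)).Preconnected → M ∈ 𝓕 := by
  classical
  obtain ⟨𝓕, h𝓕card, h𝓕⟩ := exists_finset_walk_support hN hD (2 * n) a
  refine ⟨𝓕, h𝓕card, fun M hM ha hconn => ?_⟩
  have hcard : Fintype.card (M : Set V) = n + 1 := (Fintype.card_coe M).trans hM
  obtain ⟨w, hlen, hw⟩ := exists_closed_walk_forall_mem_support hconn ⟨a, ha⟩
  let w' : G.Walk _ _ := w.map (SimpleGraph.Embedding.induce (M : Set V)).toHom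
  have hlen' : w'.length = 2 * n := by
    rw [SimpleGraph.Walk.length_map, hlen, hcard, Nat.add_sub_cancel]
  have hsupp : w'.support.toFinset = M := by
    ext v
    rw [List.mem_toFinset, SimpleGraph.Walk.support_map, List.mem_map]
    exact ⟨by rintro ⟨x, -, rfl⟩; exact x.2, fun hv => ⟨⟨v, hv⟩, hw _, rfl⟩⟩
  exact hsupp.subst (motive := (· ∈ 𝓕)) (h𝓕 a w' hlen')

end ConnectedSets

/-! ### The number of connected sets of faces -/

section ClosedSamCount

open Finset

variable {d k n : ℕ} {f g e : Face d} {M : Finset (Face d)}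

/-- The adjacency graph on the faces of all dimensions of the lattice. Connected sets of faces are
the vertex sets of its finite connected induced subgraphs. -/
def faceGraph (d : ℕ) : SimpleGraph (Face d) where
  Adj := FaceAdj
  symm := ⟨fun _ _ => FaceAdj.symm⟩
  loopless := ⟨fun _ h => h.1 rfl⟩

theorem ConnectedFaces.preconnected_induce (h : ConnectedFaces M) :
    ((faceGraph d).induce (M : Set (Face d))).Preconnected := by
  rintro ⟨f, hf⟩ ⟨g, hg⟩
  have hfg : Relation.ReflTransGen (AdjIn M) f g := h f hf g hg
  induction hfg with
  | refl => exact .refl _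
  | @tail g g' _ hgg' ih =>
    have hadj : ((faceGraph d).induce (M : Set (Face d))).Adj ⟨g, hgg'.1⟩ ⟨g', hg⟩ := hgg'.2.2
    exact (ih hgg'.1).trans hadj.reachable

/-- A finite set containing every face that has `e` in its boundary. -/
def faceCofaces (e : Face d) : Finset (Face d) :=
  univ.biUnion fun i => {(insert i e.1, e.2), (insert i e.1, e.2 - Pi.single i 1)}

theorem mem_faceCofaces_of_mem_faceEdges (h : e ∈ faceEdges f) : f ∈ faceCofaces e := by
  obtain ⟨a, ha, α, rfl | rfl, rfl⟩ := mem_faceEdges.1 h <;>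
    refine mem_biUnion.2 ⟨a, mem_univ a, ?_⟩ <;>
    simp [facet, insert_erase ha]

theorem card_faceCofaces_le (e : Face d) : #(faceCofaces e) ≤ 2 * d := by
  calc #(faceCofaces e) ≤ #(univ : Finset (Fin d)) * 2 :=
        card_biUnion_le_card_mul _ _ _ fun _ _ => card_le_two
    _ = 2 * d := by rw [card_fin, mul_comm]

/-- A finite set containing every face adjacent to `f`, used to bound the degrees of `faceGraph`. -/
def faceNeighbors (f : Face d) : Finset (Face d) :=
  (faceEdges f).biUnion faceCofaces

theorem FaceAdj.mem_faceNeighbors (h : FaceAdj f g) : g ∈ faceNeighbors f :=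
  let ⟨_, e, hef, heg⟩ := h
  mem_biUnion.2 ⟨e, hef, mem_faceCofaces_of_mem_faceEdges heg⟩

theorem card_faceNeighbors_le (f : Face d) : #(faceNeighbors f) ≤ 2 * d * (2 * d) := by
  have hedges : #(faceEdges f) ≤ 2 * d :=
    (card_faceEdges f).trans_le (Nat.mul_le_mul_left 2 (card_le_univ f.1 |>.trans_eq (card_fin d)))
  calc #(faceNeighbors f) ≤ #(faceEdges f) * (2 * d) :=
        card_biUnion_le_card_mul _ _ _ fun e _ => card_faceCofaces_le e
    _ ≤ 2 * d * (2 * d) := Nat.mul_le_mul_right _ hedges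

theorem exists_finset_connectedFaces (d n : ℕ) :
    ∃ 𝓕 : Finset (Finset (Face d)), #𝓕 ≤ 2 ^ d * (2 * d * (2 * d)) ^ (2 * n) ∧
      ∀ M, ConnectedFaces M → #M = n + 1 → ∃ M' ∈ 𝓕, TransEquiv M M' := by
  choose 𝓕 h𝓕card h𝓕 using exists_finset_connected_finsets (G := faceGraph d)
    (fun _ _ => FaceAdj.mem_faceNeighbors) card_faceNeighbors_le n
  refine ⟨univ.biUnion fun S => 𝓕 (S, 0), ?_, fun M hconn hM => ?_⟩
  · calc _ ≤ #(univ : Finset (Finset (Fin d))) * (2 * d * (2 * d)) ^ (2 * n) :=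
          card_biUnion_le_card_mul _ _ _ fun S _ => h𝓕card (S, 0)
      _ = 2 ^ d * (2 * d * (2 * d)) ^ (2 * n) := by simp
  · obtain ⟨f, hf⟩ : M.Nonempty := card_pos.1 (by lia)
    refine ⟨M.image (translateFace (-f.2)), mem_biUnion.2 ⟨f.1, mem_univ _, ?_⟩, _, rfl⟩
    refine h𝓕 (f.1, 0) _ ?_ ?_ (hconn.image_translateFace _).preconnected_induce
    · rw [card_image_of_injective _ (translateFace_injective _), hM]
    · exact mem_image.2 ⟨f, hf, Prod.ext rfl (add_neg_cancel f.2)⟩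

theorem finite_and_card_quot_transEquiv_le {P : Finset (Face d) → Prop}
    (𝓕 : Finset (Finset (Face d))) (h𝓕 : ∀ M, P M → ∃ M' ∈ 𝓕, TransEquiv M M') :
    Finite (Quot fun A B : {M // P M} => TransEquiv A.1 B.1) ∧
      Nat.card (Quot fun A B : {M // P M} => TransEquiv A.1 B.1) ≤ #𝓕 := by
  choose φ hφ hequiv using h𝓕
  let ψ (q : Quot fun A B : {M // P M} => TransEquiv A.1 B.1) : 𝓕 :=
    ⟨φ q.out.1 q.out.2, hφ _ _⟩
  have hψ : Function.Injective ψ := fun q q' h => by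
    have hφq : φ q.out.1 q.out.2 = φ q'.out.1 q'.out.2 := congrArg Subtype.val h
    rw [← q.out_eq, ← q'.out_eq]
    exact Quot.sound (transEquiv_equivalence.trans (hφq ▸ hequiv _ q.out.2)
      (transEquiv_equivalence.symm (hequiv _ q'.out.2)))
  exact ⟨.of_injective ψ hψ,
    (Nat.card_le_card_of_injective ψ hψ).trans_eq (Nat.card_eq_finsetCard 𝓕)⟩

theorem IsClosedSAM.connectedFaces (h : IsClosedSAM d k n M) : ConnectedFaces M := h.1.2.2.1

theorem IsClosedSAM.card_eq (h : IsClosedSAM d k n M) : #M = n := h.1.1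

theorem finite_quot_isClosedSAM (d k n : ℕ) :
    Finite (Quot fun A B : {M // IsClosedSAM d k (n + 1) M} => TransEquiv A.1 B.1) :=
  let ⟨𝓕, _, h𝓕⟩ := exists_finset_connectedFaces d n
  (finite_and_card_quot_transEquiv_le 𝓕 fun M hM => h𝓕 M hM.connectedFaces hM.card_eq).1

theorem closedSamCount_succ_le (d k n : ℕ) :
    closedSamCount d k (n + 1) ≤ 2 ^ d * (2 * d * (2 * d)) ^ (2 * n) :=
  let ⟨𝓕, h𝓕card, h𝓕⟩ := exists_finset_connectedFaces d n
  (finite_and_card_quot_transEquiv_le 𝓕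
    fun M hM => h𝓕 M hM.connectedFaces hM.card_eq).2.trans h𝓕card

theorem closedSamCount_le_pow (hd : 0 < d) (hn : n ≠ 0) :
    closedSamCount d k n ≤ (2 ^ d * (2 * d * (2 * d)) ^ 2) ^ n := by
  obtain ⟨m, rfl⟩ := Nat.exists_eq_succ_of_ne_zero hn
  calc closedSamCount d k (m + 1) ≤ 2 ^ d * (2 * d * (2 * d)) ^ (2 * m) :=
        closedSamCount_succ_le d k m
    _ ≤ (2 ^ d) ^ (m + 1) * (2 * d * (2 * d)) ^ (2 * (m + 1)) :=
        Nat.mul_le_mul (Nat.le_self_pow (by lia) _) (Nat.pow_le_pow_right (by positivity) (by lia))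
    _ = (2 ^ d * (2 * d * (2 * d)) ^ 2) ^ (m + 1) := by rw [pow_mul _ 2, ← mul_pow]

theorem pow_le_closedSamCount (hk : 1 ≤ k) (hkd : k < d) (N : ℕ) :
    ((k + 1) * (d - k)) ^ N ≤ closedSamCount d k (2 * k * N + (2 * k + 2)) := by
  obtain ⟨T, -, hT⟩ := exists_subset_card_eq (s := (univ : Finset (Fin d))) (n := k + 1)
    (by simpa using hkd)
  let Q : Face d := (T, 0)
  have hsurf (M : chainSurfaces N Q) := isClosedSAM_and_isRootedAt_of_mem_chainSurfaces hk N hT M.2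
  have := finite_quot_isClosedSAM d k (2 * k * N + (2 * k + 1))
  calc ((k + 1) * (d - k)) ^ N = Nat.card (chainSurfaces N Q) := by
        rw [Nat.card_eq_finsetCard, card_chainSurfaces hk N hT]
    _ ≤ closedSamCount d k (2 * k * N + (2 * k + 2)) :=
        Nat.card_le_card_of_injective (fun M => Quot.mk _ ⟨M.1, (hsurf M).1⟩) fun A B h =>
          Subtype.ext ((hsurf A).2.eq_of_transEquiv (hsurf B).2 (card_pos.1 (by lia))
            (transEquiv_of_quotMk_eq (P := IsClosedSAM d k _) h))

end ClosedSamCount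

/-! ### Growth constants -/

theorem rpow_inv_le_limsup_rpow_inv {u : ℕ → ℝ} {p q : ℕ} {C K : ℝ} (hp : 0 < p) (hC : 0 ≤ C)
    (hu : ∀ n, 0 ≤ u n) (hlower : ∀ N, C ^ N ≤ u (p * N + q))
    (hupper : ∀ n ≠ 0, u n ≤ K ^ n) :
    C ^ (1 / (p : ℝ)) ≤ limsup (fun n : ℕ => u n ^ (1 / (n : ℝ))) atTop := by
  have hK : 0 ≤ K := (hu 1).trans (by simpa using hupper 1 one_ne_zero)
  have hbdd : IsBoundedUnder (· ≤ ·) atTop fun n : ℕ => u n ^ (1 / (n : ℝ)) := by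
    refine isBoundedUnder_of_eventually_le (a := K) ?_
    filter_upwards [eventually_ne_atTop 0] with n hn
    rw [one_div, Real.rpow_inv_le_iff_of_pos (hu n) hK (by positivity), Real.rpow_natCast]
    exact hupper n hn
  have hsub : Tendsto (fun N => p * N + q) atTop atTop :=
    tendsto_atTop_mono (fun N => (Nat.le_mul_of_pos_left N hp).trans (Nat.le_add_right _ q))
      tendsto_id
  have hexp : Tendsto (fun N : ℕ => (N : ℝ) / (p * N + q : ℕ)) atTop (nhds (1 / (p : ℝ))) := by
    have hp' : (p : ℝ) ≠ 0 := by positivity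
    simpa [add_comm] using tendsto_add_mul_div_add_mul_atTop_nhds 0 (q : ℝ) 1 hp'
  have hlim : Tendsto (fun N : ℕ => C ^ ((N : ℝ) / (p * N + q : ℕ))) atTop
      (nhds (C ^ (1 / (p : ℝ)))) :=
    tendsto_const_nhds.rpow hexp (.inr (by positivity))
  refine le_of_forall_lt_imp_le_of_dense fun b hb => ?_
  refine le_limsup_of_frequently_le (hsub.frequently (Eventually.frequently ?_)) hbdd
  filter_upwards [hlim.eventually (lt_mem_nhds hb)] with N hN
  calc b ≤ C ^ ((N : ℝ) / (p * N + q : ℕ)) := hN.le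
    _ = (C ^ N) ^ (1 / ((p * N + q : ℕ) : ℝ)) := by
        rw [← Real.rpow_natCast, ← Real.rpow_mul hC, mul_one_div]
    _ ≤ u (p * N + q) ^ (1 / ((p * N + q : ℕ) : ℝ)) :=
        Real.rpow_le_rpow (by positivity) (hlower N) (by positivity)

theorem closedSamCount_limsup_lower_bound (d k : ℕ) (hk : 1 ≤ k) (hkd : k < d) :
    (((k + 1) * (d - k) : ℕ) : ℝ) ^ (1 / (2 * (k : ℝ))) ≤
      limsup (fun n : ℕ => (closedSamCount d k n : ℝ) ^ (1 / (n : ℝ))) atTop := by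
  have hlower (N : ℕ) :
      (((k + 1) * (d - k) : ℕ) : ℝ) ^ N ≤ closedSamCount d k (2 * k * N + (2 * k + 2)) :=
    mod_cast pow_le_closedSamCount hk hkd N
  have hupper (n : ℕ) (hn : n ≠ 0) :
      (closedSamCount d k n : ℝ) ≤ ((2 ^ d * (2 * d * (2 * d)) ^ 2 : ℕ) : ℝ) ^ n :=
    mod_cast closedSamCount_le_pow (by lia) hn
  have hlimsup := rpow_inv_le_limsup_rpow_inv (u := fun n => closedSamCount d k n)
    (by positivity) (Nat.cast_nonneg _) (fun _ => Nat.cast_nonneg _) hlower hupper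
  simpa only [Nat.cast_mul, Nat.cast_ofNat] using hlimsup
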